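/- Let ε ∈ (0,1) be irrational with continued fraction expansion ε = [0; a_1, a_2, …] whose partial quotients are bounded, let ℓ satisfy max{ε, 1−ε} < ℓ < 1, and let x0 ∈ [0,ℓ). Then the index of the 3iet word satisfies ind(u_{ε,ℓ,x0}) ≥ sup_{n} ⌊a_n/2⌋. -/

import Mathlib

/-!
The map `T3 ε ℓ` is the first-return map to `[0, ℓ)` of the rotation `T2 ε : x ↦ x - ε mod 1`.
Code the rotation by the letters `A`, `B`, `C` on the three intervals of `T3` and by a blank
(`none`) on `[ℓ, 1)`; erasing the blanks gives `u3` (`filterMap_symb`, `exists_retr_eq`).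

Let `a = a_{n+1}` and let `p / q` be the `n`-th convergent of `ε`, so that `θ = q ε - p` satisfies
`a q |θ| < 1` (`exists_approx`). The `q`-th iterate of the rotation is the translation by `-θ`, and
the symbols of `z` and `z - θ` agree unless `0` or `ℓ` separates (mod 1) `z` from `z - θ` or
`z - ε` from `z - ε - θ` (`symb_shift`): the other two endpoints, `ε` and `ℓ - 1 + ε`, are sent by
the rotation to `0` and `ℓ`. So the blanked word starting at `y` has period `q` on a window of
length `k q` as soon as `y - i ε` avoids two arcs of length `|θ|` for all `0 ≤ i ≤ (k - 1) q`. With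
`k = ⌊a / 2⌋` the forbidden `y` have total measure at most `2 ((k - 1) q + 1) |θ| ≤ a q |θ| < 1`,
hence the allowed ones contain a nonempty open set, which the dense orbit of `x0` meets
(`exists_good`). Erasing blanks from the resulting `k`-th power gives a `k`-th power in `u3`.
-/

/-- The alphabet of 3iet words. -/
inductive L3 | A | B | C
deriving DecidableEq, Inhabited

/-- The three-interval exchange transformation `T_{ε,ℓ}`. -/
noncomputable def T3 (ε ℓ : ℝ) (x : ℝ) : ℝ :=
  if x < ℓ - 1 + ε then x + 1 - ε
  else if x < ε then x + 1 - 2*ε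
  else x - ε

/-- The 3iet word `u_{ε,ℓ,x0}` coding the orbit of `x0` under `T_{ε,ℓ}`. -/
noncomputable def u3 (ε ℓ x0 : ℝ) (n : ℕ) : L3 :=
  if (T3 ε ℓ)^[n] x0 < ℓ - 1 + ε then L3.A
  else if (T3 ε ℓ)^[n] x0 < ε then L3.B
  else L3.C

/-- The two-interval exchange transformation `T_ε`. -/
noncomputable def T2 (ε : ℝ) (x : ℝ) : ℝ := if x < ε then x + 1 - ε else x - ε

/-- The Sturmian word `u_{ε,x0}` of slope `ε` coding the orbit of `x0` under `T_ε`
(letter `0` is `false`, letter `1` is `true`). -/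
noncomputable def u2 (ε x0 : ℝ) (n : ℕ) : Bool := if (T2 ε)^[n] x0 < ε then false else true

/-- `w` is a factor of the infinite word `u`. -/
def IsFactor {α : Type*} (w : List α) (u : ℕ → α) : Prop :=
  ∃ i : ℕ, w = (List.range w.length).map fun j => u (i + j)

/-- The prefix of length `m` of the periodic infinite word `www⋯`;
for `|w| ≤ m` this is the fractional power `w^{m/|w|}`. -/
def powPrefix {α : Type*} [Inhabited α] (w : List α) (m : ℕ) : List α :=
  (List.range m).map fun j => w.getD (j % w.length) default

/-- The index of the factor `w` in the infinite word `u`: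
`sup {r ∈ ℚ, r ≥ 1, r|w| ∈ ℕ | w^r is a factor of u}`, as an element of `ℝ ∪ {+∞}`. -/
noncomputable def factorIndex {α : Type*} [Inhabited α] (u : ℕ → α) (w : List α) : EReal :=
  sSup {x : EReal | ∃ m : ℕ, w.length ≤ m ∧ IsFactor (powPrefix w m) u ∧
    x = (((m : ℝ) / (w.length : ℝ) : ℝ) : EReal)}

/-- The index of the infinite word `u`: `sup {ind(w) | w a nonempty factor of u}`. -/
noncomputable def wordIndex {α : Type*} [Inhabited α] (u : ℕ → α) : EReal :=
  sSup {x : EReal | ∃ w : List α, w ≠ [] ∧ IsFactor w u ∧ x = factorIndex u w}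

/-- The Gauss map `x ↦ {1/x}`. -/
noncomputable def gaussMap (x : ℝ) : ℝ := Int.fract x⁻¹

/-- `cfa ε n` is the partial quotient `a_{n+1}` of the continued fraction
expansion `ε = [0; a₁, a₂, a₃, …]` of the irrational `ε ∈ (0,1)`. -/
noncomputable def cfa (ε : ℝ) (n : ℕ) : ℕ := ⌊(gaussMap^[n] ε)⁻¹⌋₊

/-- The morphism `σ01 : A ↦ 0, B ↦ 01, C ↦ 1`. -/
def sigma01 : L3 → List Bool
  | L3.A => [false]
  | L3.B => [false, true]
  | L3.C => [true]

/-- The morphism `σ10 : A ↦ 0, B ↦ 10, C ↦ 1`. -/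
def sigma10 : L3 → List Bool
  | L3.A => [false]
  | L3.B => [true, false]
  | L3.C => [true]

/-- The image `φ(u₀)φ(u₁)φ(u₂)⋯` of an infinite word `u` under a (nonerasing) morphism `φ`. -/
def morphWord (φ : L3 → List Bool) (u : ℕ → L3) (m : ℕ) : Bool :=
  ((List.range (m+1)).flatMap fun k => φ (u k)).getD m false

/-- `u` is a uniformly recurrent infinite word: every factor occurs infinitely often
with bounded gaps (every window of some length `R` contains an occurrence). -/
def UniformlyRecurrent {α : Type*} (u : ℕ → α) : Prop :=
  ∀ w : List α, IsFactor w u → ∃ R : ℕ, ∀ i : ℕ, ∃ j : ℕ, i ≤ j ∧ j < i + R ∧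
    w = (List.range w.length).map fun t => u (j + t)

/-- `u` is eventually periodic. -/
def EventuallyPeriodic {α : Type*} (u : ℕ → α) : Prop :=
  ∃ N p : ℕ, 0 < p ∧ ∀ n : ℕ, N ≤ n → u (n + p) = u n

/-- The standard words of `ε = [0; a₁, a₂, …]`, with the index shifted by one:
`sw ε 0 = s₋₁ = 1`, `sw ε 1 = s₀ = 0`, `sw ε 2 = s₁ = s₀^{a₁-1} s₋₁`, and
`sw ε (n+3) = s_{n+2} = s_{n+1}^{a_{n+2}} s_n`. -/
noncomputable def sw (ε : ℝ) : ℕ → List Bool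
  | 0 => [true]
  | 1 => [false]
  | 2 => (List.replicate (cfa ε 0 - 1) ([false] : List Bool)).flatten ++ [true]
  | (n+3) => (List.replicate (cfa ε (n+1)) (sw ε (n+2))).flatten ++ sw ε (n+1)

/-- Denominators of the convergents of `ε`, shifted by one: `qq ε 0 = q₋₁ = 0`,
`qq ε 1 = q₀ = 1`, and `qq ε (n+2) = q_{n+1} = a_{n+1} q_n + q_{n-1}`. -/
noncomputable def qq (ε : ℝ) : ℕ → ℕ
  | 0 => 0
  | 1 => 1
  | (n+2) => cfa ε n * qq ε (n+1) + qq ε n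

/-- `u` is a 3iet word. -/
def Is3ietWord (u : ℕ → L3) : Prop :=
  ∃ ε ℓ x0 : ℝ, Irrational ε ∧ 0 < ε ∧ ε < 1 ∧ max ε (1 - ε) < ℓ ∧ ℓ < 1 ∧
    x0 ∈ Set.Ico 0 ℓ ∧ u = u3 ε ℓ x0

/-- `v` is a Sturmian word. -/
def IsSturmianWord (v : ℕ → Bool) : Prop :=
  ∃ ε x0 : ℝ, Irrational ε ∧ 0 < ε ∧ ε < 1 ∧ x0 ∈ Set.Ico (0:ℝ) 1 ∧ v = u2 ε x0

/-- The infinite binary word `v1` is amicable with `v2` (`v1 ∝ v2`). -/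
def AmicableInf (v1 v2 : ℕ → Bool) : Prop :=
  ∃ w : ℕ → L3, v1 = morphWord sigma01 w ∧ v2 = morphWord sigma10 w

/-- The morphism `Φ_k : A ↦ 0, B ↦ 01^{k+1}, C ↦ 01^k`. -/
def Phi (k : ℕ) : L3 → List Bool
  | L3.A => [false]
  | L3.B => false :: List.replicate (k+1) true
  | L3.C => false :: List.replicate k true

/-- The infinite word `B₀B₁B₂⋯` obtained by concatenating the sequence of
(nonempty) blocks `B`. -/
def concatOfBlocks (B : ℕ → List Bool) (m : ℕ) : Bool :=
  ((List.range (m+1)).flatMap B).getD m false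

/-! ### Diophantine approximation -/

lemma irrational_gaussMap_iterate {ε : ℝ} (h : Irrational ε) (n : ℕ) :
    Irrational (gaussMap^[n] ε) := by
  induction n with
  | zero => simpa using h
  | succ n ih =>
    rw [Function.iterate_succ_apply']
    unfold gaussMap Int.fract
    exact (irrational_inv_iff.2 ih).sub_intCast _

lemma gaussMap_iterate_nonneg {ε : ℝ} (h : 0 < ε) (n : ℕ) : 0 ≤ gaussMap^[n] ε := by
  cases n with
  | zero => simpa using h.le
  | succ n =>
    rw [Function.iterate_succ_apply']
    exact Int.fract_nonneg _

lemma gaussMap_iterate_lt_one {ε : ℝ} (h : ε < 1) (n : ℕ) : gaussMap^[n] ε < 1 := by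
  cases n with
  | zero => simpa using h
  | succ n =>
    rw [Function.iterate_succ_apply']
    exact Int.fract_lt_one _

/-- Two consecutive convergents `p' / q'`, `p / q` of `ε`. The errors `q' ε - p'` and `q ε - p` have
opposite signs (recorded by `s`), their ratio is the `n`-th complete remainder, and the determinant
identity makes the cross combination equal to `1`. -/
lemma convergent_invariant {ε : ℝ} (hirr : Irrational ε) (h0 : 0 < ε) (h1 : ε < 1) (n : ℕ) :
    ∃ (q q' : ℕ) (p p' : ℤ) (s : ℝ), 1 ≤ q ∧ (s = 1 ∨ s = -1) ∧
      0 ≤ s * (q * ε - p) ∧ 0 ≤ -s * (q' * ε - p') ∧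
      s * (q * ε - p) = gaussMap^[n] ε * (-s * (q' * ε - p')) ∧
      q * (-s * (q' * ε - p')) + q' * (s * (q * ε - p)) = 1 := by
  induction n with
  | zero =>
    refine ⟨1, 0, 0, 1, 1, le_rfl, Or.inl rfl, ?_, ?_, ?_, ?_⟩ <;> simp [h0.le]
  | succ n ih =>
    obtain ⟨q, q', p, p', s, hq, hs, hd, hd', hr, hdet⟩ := ih
    have hx := (gaussMap_iterate_nonneg h0 n).lt_of_ne'
      (irrational_gaussMap_iterate hirr n).ne_zero
    set x := gaussMap^[n] ε with hxdef
    have hfl : ((⌊x⁻¹⌋₊ : ℕ) : ℝ) = x⁻¹ - gaussMap x := by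
      unfold gaussMap Int.fract
      rw [natCast_floor_eq_intCast_floor (inv_nonneg.2 hx.le)]
      ring
    have hg : 0 ≤ gaussMap x := Int.fract_nonneg _
    have hrec : -s * (q' * ε - p') = x⁻¹ * (s * (q * ε - p)) := by
      rw [hr]; field_simp
    have ha : 1 ≤ ⌊x⁻¹⌋₊ :=
      Nat.le_floor (by simpa using (one_le_inv₀ hx).2 (gaussMap_iterate_lt_one h1 n).le)
    have hnew : -s * (((⌊x⁻¹⌋₊ * q + q' : ℕ) : ℝ) * ε - ((⌊x⁻¹⌋₊ * p + p' : ℤ) : ℝ))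
        = gaussMap x * (s * (q * ε - p)) := by
      push_cast
      linear_combination hrec - (s * (q * ε - p)) * hfl
    refine ⟨⌊x⁻¹⌋₊ * q + q', q, ⌊x⁻¹⌋₊ * p + p', p, -s, by nlinarith, ?_, ?_, ?_, ?_, ?_⟩
    · rcases hs with h | h <;> simp [h]
    · rw [hnew]; positivity
    · simpa using hd
    · rw [Function.iterate_succ_apply', ← hxdef, hnew, neg_neg]
    · push_cast
      linear_combination hdet

lemma exists_approx {ε : ℝ} (hirr : Irrational ε) (h0 : 0 < ε) (h1 : ε < 1) (n : ℕ) :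
    ∃ (q : ℕ) (p : ℤ), 1 ≤ q ∧ (cfa ε n : ℝ) * q * |q * ε - p| < 1 := by
  obtain ⟨q, q', p, p', s, hq, hs, hd, hd', hr, hdet⟩ := convergent_invariant hirr h0 h1 n
  refine ⟨q, p, hq, ?_⟩
  have hx := (gaussMap_iterate_nonneg h0 n).lt_of_ne'
    (irrational_gaussMap_iterate hirr n).ne_zero
  have habs : |q * ε - p| = s * (q * ε - p) := by
    rcases hs with rfl | rfl
    · rw [one_mul, abs_of_nonneg (by linarith)]
    · rw [neg_one_mul, abs_of_nonpos (by linarith)]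
  have hle : (cfa ε n : ℝ) * q * |q * ε - p| ≤ 1 := by
    have hfl : (cfa ε n : ℝ) ≤ (gaussMap^[n] ε)⁻¹ := Nat.floor_le (by positivity)
    have h2 : (cfa ε n : ℝ) * |q * ε - p| ≤ -s * (q' * ε - p') := by
      calc (cfa ε n : ℝ) * |q * ε - p| ≤ (gaussMap^[n] ε)⁻¹ * |q * ε - p| := by gcongr
        _ = -s * (q' * ε - p') := by rw [habs, hr]; field_simp
    have h3 : (q : ℝ) * ((cfa ε n : ℝ) * |q * ε - p|) ≤ q * (-s * (q' * ε - p')) := by gcongr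
    have h4 : 0 ≤ (q' : ℝ) * (s * (q * ε - p)) := by positivity
    linarith
  refine lt_of_le_of_ne hle fun heq => ?_
  -- equality would make `ε` rational
  rw [habs] at heq
  have hz : ∃ z : ℤ, (z : ℝ) = s := by
    rcases hs with rfl | rfl
    exacts [⟨1, by simp⟩, ⟨-1, by simp⟩]
  obtain ⟨z, rfl⟩ := hz
  have hne : (cfa ε n * q * z * q : ℤ) ≠ 0 := by
    intro h
    have h' : (cfa ε n : ℝ) * q * z * q = 0 := by exact_mod_cast h
    have hq0 : (q : ℝ) ≠ 0 := by positivity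
    have h'' : (cfa ε n : ℝ) * q * z = 0 := (mul_eq_zero.1 h').resolve_right hq0
    have : (cfa ε n : ℝ) * q * (z * (q * ε - p)) = 0 := by linear_combination h'' * (q * ε - p)
    linarith
  have hI := (hirr.intCast_mul hne)
  refine hI ⟨(1 + cfa ε n * q * z * p : ℤ), ?_⟩
  push_cast
  linear_combination -heq

/-! ### The rotation and its coding -/

lemma T2_fract {ε : ℝ} (h0 : 0 < ε) (h1 : ε < 1) (t : ℝ) :
    T2 ε (Int.fract t) = Int.fract (t - ε) := by
  have hn := Int.fract_nonneg t
  have hl := Int.fract_lt_one t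
  have e := Int.floor_add_fract t
  symm
  unfold T2
  split_ifs with h
  · rw [Int.fract_eq_iff]
    exact ⟨by linarith, by linarith, ⌊t⌋ - 1, by push_cast; linarith⟩
  · rw [Int.fract_eq_iff]
    exact ⟨by linarith, by linarith, ⌊t⌋, by linarith⟩

lemma T2_iterate_fract {ε : ℝ} (h0 : 0 < ε) (h1 : ε < 1) (t : ℝ) (i : ℕ) :
    (T2 ε)^[i] (Int.fract t) = Int.fract (t - i * ε) := by
  induction i with
  | zero => simp
  | succ i ih =>
    rw [Function.iterate_succ_apply', ih, T2_fract h0 h1]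
    congr 1
    push_cast
    ring

/-- The symbol of a point `z ∈ [0, 1)` of the circle: the letter of `T3` if `z < ℓ`, and `none` (a
blank, to be erased) on `[ℓ, 1)`. -/
noncomputable def symb (ε ℓ z : ℝ) : Option L3 :=
  if z < ℓ - 1 + ε then some L3.A
  else if z < ε then some L3.B
  else if z < ℓ then some L3.C
  else none

/-- The first point of the forward `T2`-orbit of `z ∈ [0, 1)` that lies in `[0, ℓ)`. -/
noncomputable def retr (ε ℓ z : ℝ) : ℝ := if z < ℓ then z else z - ε

lemma T2_mem {ε z : ℝ} (h0 : 0 < ε) (h1 : ε < 1) (hz : z ∈ Set.Ico (0 : ℝ) 1) :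
    T2 ε z ∈ Set.Ico (0 : ℝ) 1 := by
  obtain ⟨ha, hb⟩ := hz
  unfold T2
  split_ifs <;> constructor <;> linarith

/-- `T3` is the map induced by `T2` on `[0, ℓ)`. -/
lemma retr_T2 {ε ℓ z : ℝ} (hε : ε < ℓ) (hε' : 1 - ε < ℓ) (hl1 : ℓ < 1)
    (hz : z ∈ Set.Ico (0 : ℝ) 1) :
    retr ε ℓ (T2 ε z) = if z < ℓ then T3 ε ℓ z else retr ε ℓ z := by
  obtain ⟨ha, hb⟩ := hz
  unfold retr T2 T3
  split_ifs <;> linarith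

lemma u3_zero (ε ℓ z : ℝ) :
    u3 ε ℓ z 0 = if z < ℓ - 1 + ε then L3.A else if z < ε then L3.B else L3.C := rfl

lemma u3_succ (ε ℓ z : ℝ) (n : ℕ) : u3 ε ℓ z (n + 1) = u3 ε ℓ (T3 ε ℓ z) n := rfl

lemma u3_iterate (ε ℓ z : ℝ) (i n : ℕ) : u3 ε ℓ ((T3 ε ℓ)^[i] z) n = u3 ε ℓ z (i + n) := by
  unfold u3
  rw [← Function.iterate_add_apply, Nat.add_comm]

/-- Erasing the blanks from the coding of the rotation orbit of `z` yields a prefix of the 3iet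
word of the first point of that orbit in `[0, ℓ)`. -/
lemma filterMap_symb {ε ℓ : ℝ} (h0 : 0 < ε) (h1 : ε < 1) (hε : ε < ℓ) (hε' : 1 - ε < ℓ)
    (hl1 : ℓ < 1) (n : ℕ) : ∀ z ∈ Set.Ico (0 : ℝ) 1,
    ∃ m, (List.range n).filterMap (fun i => symb ε ℓ ((T2 ε)^[i] z)) =
      (List.range m).map (u3 ε ℓ (retr ε ℓ z)) := by
  induction n with
  | zero => exact fun z _ => ⟨0, by simp⟩
  | succ n ih =>
    intro z hz
    obtain ⟨m, hm⟩ := ih (T2 ε z) (T2_mem h0 h1 hz)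
    rw [retr_T2 hε hε' hl1 hz] at hm
    rw [List.range_succ_eq_map, List.filterMap_cons, List.filterMap_map]
    have hm' : (List.range n).filterMap ((fun i => symb ε ℓ ((T2 ε)^[i] z)) ∘ Nat.succ) = _ := hm
    rw [hm']
    by_cases hzl : z < ℓ
    · refine ⟨m + 1, ?_⟩
      have hs : symb ε ℓ ((T2 ε)^[0] z) = some (u3 ε ℓ z 0) := by
        rw [u3_zero, Function.iterate_zero, id]
        unfold symb
        split_ifs <;> rfl
      rw [hs, if_pos hzl, List.range_succ_eq_map, List.map_cons, List.map_map]
      have hr : retr ε ℓ z = z := if_pos hzl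
      rw [hr]
      rfl
    · refine ⟨m, ?_⟩
      have hs : symb ε ℓ ((T2 ε)^[0] z) = none := by
        rw [Function.iterate_zero, id]
        unfold symb
        split_ifs <;> first | rfl | (exfalso; linarith)
      rw [hs, if_neg hzl]

lemma exists_retr_eq {ε ℓ x0 : ℝ} (h0 : 0 < ε) (h1 : ε < 1) (hε : ε < ℓ) (hε' : 1 - ε < ℓ)
    (hl1 : ℓ < 1) (hx0 : x0 ∈ Set.Ico 0 ℓ) (j : ℕ) :
    ∃ i, retr ε ℓ ((T2 ε)^[j] x0) = (T3 ε ℓ)^[i] x0 := by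
  have hmem : ∀ j, (T2 ε)^[j] x0 ∈ Set.Ico (0 : ℝ) 1 := by
    intro j
    induction j with
    | zero => exact ⟨hx0.1, hx0.2.trans hl1⟩
    | succ j ih => rw [Function.iterate_succ_apply']; exact T2_mem h0 h1 ih
  induction j with
  | zero => exact ⟨0, if_pos hx0.2⟩
  | succ j ih =>
    obtain ⟨i, hi⟩ := ih
    rw [Function.iterate_succ_apply', retr_T2 hε hε' hl1 (hmem j)]
    split_ifs with h
    · refine ⟨i + 1, ?_⟩
      rw [Function.iterate_succ_apply', ← hi]
      unfold retr
      rw [if_pos h]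
    · exact ⟨i, hi⟩

/-- The point `c` does not separate, modulo `1`, the points `t` and `t - θ`. -/
def NotSep (θ c t : ℝ) : Prop := ∀ m : ℤ, 0 < (t - c - m) * (t - c - m - θ)

lemma fract_sub_of_notSep {θ t : ℝ} (h : NotSep θ 0 t) :
    Int.fract (t - θ) = Int.fract t - θ := by
  have e := Int.floor_add_fract t
  have hn := Int.fract_nonneg t
  have hl := Int.fract_lt_one t
  have ha := h ⌊t⌋
  have hb := h (⌊t⌋ + 1)
  push_cast at hb
  rw [show t - 0 - (⌊t⌋ : ℝ) = Int.fract t by linarith] at ha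
  rw [show t - 0 - ((⌊t⌋ : ℝ) + 1) = Int.fract t - 1 by linarith] at hb
  rw [Int.fract_eq_iff]
  refine ⟨?_, ?_, ⌊t⌋, by linarith⟩
  · exact (pos_of_mul_pos_right ha hn).le
  · by_contra hc
    nlinarith

lemma lt_iff_of_mul_pos {a b : ℝ} (h : 0 < a * b) : a < 0 ↔ b < 0 := by
  rcases mul_pos_iff.1 h with ⟨h1, h2⟩ | ⟨h1, h2⟩
  · exact ⟨fun h => by linarith, fun h => by linarith⟩
  · exact ⟨fun _ => h2, fun _ => h1⟩

lemma symb_shift {ε ℓ θ t : ℝ} (ha : NotSep θ 0 t) (hb : NotSep θ ℓ t)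
    (hc : NotSep θ 0 (t - ε)) (hd : NotSep θ ℓ (t - ε)) :
    symb ε ℓ (Int.fract (t - θ)) = symb ε ℓ (Int.fract t) := by
  rw [fract_sub_of_notSep ha]
  have e := Int.floor_add_fract t
  have h1 := lt_iff_of_mul_pos (hb ⌊t⌋)
  have h2 := lt_iff_of_mul_pos (hc ⌊t⌋)
  have h3 := lt_iff_of_mul_pos (hd (⌊t⌋ - 1))
  push_cast at h3
  have i1 : Int.fract t - θ < ℓ ↔ Int.fract t < ℓ := by
    constructor <;> intro h
    · linarith [h1.2 (by linarith)]
    · linarith [h1.1 (by linarith)]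
  have i2 : Int.fract t - θ < ε ↔ Int.fract t < ε := by
    constructor <;> intro h
    · linarith [h2.2 (by linarith)]
    · linarith [h2.1 (by linarith)]
  have i3 : Int.fract t - θ < ℓ - 1 + ε ↔ Int.fract t < ℓ - 1 + ε := by
    constructor <;> intro h
    · linarith [h3.2 (by linarith)]
    · linarith [h3.1 (by linarith)]
  unfold symb
  simp only [i1, i2, i3]

/-! ### A point of the orbit avoiding the forbidden arcs -/

lemma notSep_of_not_mem {θ c t b : ℝ}
    (h : ((t : ℝ) : UnitAddCircle) ∉
      Metric.closedBall (((b + c + θ / 2 : ℝ)) : UnitAddCircle) (|θ| / 2)) :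
    NotSep θ c (t - b) := by
  intro m
  rw [Metric.mem_closedBall, dist_eq_norm, ← AddCircle.coe_sub, UnitAddCircle.norm_eq, not_le] at h
  have h2 := h.trans_le (round_le (t - (b + c + θ / 2)) m)
  have h3 : (|θ| / 2) ^ 2 < |t - (b + c + θ / 2) - m| ^ 2 := by gcongr
  rw [div_pow, sq_abs, sq_abs] at h3
  nlinarith

lemma exists_good {ε : ℝ} (hirr : Irrational ε) (ℓ x0 θ : ℝ) (M : ℕ) (hM : 2 * M * |θ| < 1) :
    ∃ j : ℕ, ∀ i < M, NotSep θ 0 (x0 - j * ε - i * ε) ∧ NotSep θ ℓ (x0 - j * ε - i * ε) := by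
  set B : ℝ → ℕ → Set UnitAddCircle := fun c i =>
    Metric.closedBall (((i * ε + c + θ / 2 : ℝ)) : UnitAddCircle) (|θ| / 2) with hB
  set S : Set UnitAddCircle := ⋃ i ∈ Finset.range M, (B 0 i ∪ B ℓ i) with hS
  have hvol : ∀ c i, MeasureTheory.volume (B c i) ≤ ENNReal.ofReal |θ| := by
    intro c i
    rw [hB, AddCircle.volume_closedBall]
    exact ENNReal.ofReal_le_ofReal ((min_le_right _ _).trans (by linarith))
  have hSvol : MeasureTheory.volume S < 1 := by
    calc MeasureTheory.volume S
        ≤ ∑ i ∈ Finset.range M, MeasureTheory.volume (B 0 i ∪ B ℓ i) :=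
          MeasureTheory.measure_biUnion_finset_le _ _
      _ ≤ ∑ i ∈ Finset.range M, ENNReal.ofReal (2 * |θ|) := by
          refine Finset.sum_le_sum fun i _ => (MeasureTheory.measure_union_le _ _).trans ?_
          rw [two_mul, ENNReal.ofReal_add (abs_nonneg _) (abs_nonneg _)]
          exact add_le_add (hvol _ _) (hvol _ _)
      _ = ENNReal.ofReal (2 * M * |θ|) := by
          rw [Finset.sum_const, Finset.card_range, ← ENNReal.ofReal_nsmul, nsmul_eq_mul]
          congr 1
          ring
      _ < 1 := by
          rw [← ENNReal.ofReal_one]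
          exact (ENNReal.ofReal_lt_ofReal_iff one_pos).2 hM
  have hclosed : IsClosed S :=
    isClosed_biUnion_finset fun i _ => Metric.isClosed_closedBall.union Metric.isClosed_closedBall
  have hne : Sᶜ.Nonempty := by
    rw [Set.nonempty_compl]
    intro h
    rw [h, UnitAddCircle.measure_univ] at hSvol
    exact lt_irrefl _ hSvol
  have hdense : DenseRange (fun j : ℕ => j • ((ε : ℝ) : UnitAddCircle)) := by
    rw [← denseRange_zsmul_iff_nsmul, AddCircle.denseRange_zsmul_coe_iff, div_one]
    exact hirr
  have hopen : IsOpen ((fun z : UnitAddCircle => (x0 : UnitAddCircle) - z) ⁻¹' Sᶜ) :=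
    hclosed.isOpen_compl.preimage (by fun_prop)
  have hne' : ((fun z : UnitAddCircle => (x0 : UnitAddCircle) - z) ⁻¹' Sᶜ).Nonempty := by
    obtain ⟨z, hz⟩ := hne
    exact ⟨x0 - z, by simpa using hz⟩
  obtain ⟨j, hj⟩ := hdense.exists_mem_open hopen hne'
  refine ⟨j, fun i hi => ?_⟩
  have hj' : ((x0 - j * ε : ℝ) : UnitAddCircle) ∉ S := by
    have : ((x0 - j * ε : ℝ) : UnitAddCircle)
        = (x0 : UnitAddCircle) - j • ((ε : ℝ) : UnitAddCircle) := by
      rw [← AddCircle.coe_nsmul, nsmul_eq_mul, AddCircle.coe_sub]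
    rw [this]
    exact hj
  simp only [hS, Set.mem_iUnion, Set.mem_union, Finset.mem_range, not_exists, not_or] at hj'
  exact ⟨notSep_of_not_mem (hj' i hi).1, notSep_of_not_mem (hj' i hi).2⟩

/-! ### Powers of words -/

lemma filterMap_periodic {α : Type*} (v : ℕ → Option α) (q k : ℕ)
    (h : ∀ j < k, ∀ i < q, v (j * q + i) = v i) :
    (List.range (k * q)).filterMap v =
      (List.replicate k ((List.range q).filterMap v)).flatten := by
  induction k with
  | zero => simp
  | succ k ih =>
    rw [Nat.succ_mul, List.range_add, List.filterMap_append,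
      ih fun j hj => h j (hj.trans (Nat.lt_succ_self k)), List.replicate_succ',
      List.flatten_append, List.filterMap_map]
    congr 1
    simp only [List.flatten_cons, List.flatten_nil, List.append_nil]
    exact List.filterMap_congr fun i hi => h k (Nat.lt_succ_self k) i (List.mem_range.1 hi)

lemma powPrefix_mul {α : Type*} [Inhabited α] (w : List α) (k : ℕ) :
    powPrefix w (k * w.length) = (List.replicate k w).flatten := by
  unfold powPrefix
  induction k with
  | zero => simp
  | succ k ih =>
    rw [Nat.succ_mul, List.range_add, List.map_append, ih, List.replicate_succ',
      List.flatten_append, List.map_map]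
    congr 1
    simp only [List.flatten_cons, List.flatten_nil, List.append_nil]
    refine List.ext_getElem (by simp) fun i h1 h2 => ?_
    simp [Nat.mod_eq_of_lt h2, h2]

lemma isFactor_of_eq {α : Type*} {u : ℕ → α} {w : List α} {i m : ℕ}
    (h : w = (List.range m).map fun j => u (i + j)) : IsFactor w u := by
  have hm : w.length = m := by rw [h]; simp
  exact ⟨i, by rw [hm]; exact h⟩

lemma isFactor_of_prefix {α : Type*} {u : ℕ → α} {w w' : List α} (h : IsFactor (w ++ w') u) :
    IsFactor w u := by
  obtain ⟨i, hi⟩ := h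
  rw [List.length_append, List.range_add, List.map_append] at hi
  exact ⟨i, (List.append_inj hi (by simp)).1⟩

lemma le_wordIndex {α : Type*} [Inhabited α] {u : ℕ → α} {w : List α} {k : ℕ} (hw : w ≠ [])
    (hk : 1 ≤ k) (h : IsFactor (List.replicate k w).flatten u) :
    (k : EReal) ≤ wordIndex u := by
  have hwf : IsFactor w u := by
    obtain ⟨k, rfl⟩ := Nat.exists_eq_add_of_le' hk
    rw [List.replicate_succ, List.flatten_cons] at h
    exact isFactor_of_prefix h
  have hlen : (w.length : ℝ) ≠ 0 := by
    simpa using hw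
  refine le_trans ?_ (le_sSup ⟨w, hw, hwf, rfl⟩)
  refine le_sSup ⟨k * w.length, Nat.le_mul_of_pos_left _ hk, ?_, ?_⟩
  · rwa [powPrefix_mul]
  · rw [Nat.cast_mul, mul_div_cancel_right₀ _ hlen]
    rfl

/-! ### The lower bound -/

/-- Two consecutive blanks never occur. -/
lemma symb_T2_ne_none {ε ℓ z : ℝ} (hε' : 1 - ε < ℓ) (hz : z < 1)
    (h : symb ε ℓ z = none) : symb ε ℓ (T2 ε z) ≠ none := by
  unfold symb T2 at *
  split_ifs at * <;> first | (exfalso; linarith) | simp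

lemma half_cfa_le {ε ℓ x0 : ℝ} (hirr : Irrational ε) (h0 : 0 < ε) (h1 : ε < 1)
    (hε : ε < ℓ) (hε' : 1 - ε < ℓ) (hl1 : ℓ < 1) (hx0 : x0 ∈ Set.Ico 0 ℓ) (n : ℕ) :
    ((cfa ε n / 2 : ℕ) : EReal) ≤ wordIndex (u3 ε ℓ x0) := by
  set k := cfa ε n / 2 with hk
  by_cases hk2 : k < 2
  · have : (1 : EReal) ≤ wordIndex (u3 ε ℓ x0) := by
      have := le_wordIndex (u := u3 ε ℓ x0) (w := [u3 ε ℓ x0 0]) (k := 1) (by simp) le_rfl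
        ⟨0, by simp⟩
      simpa using this
    refine le_trans ?_ this
    exact_mod_cast (by omega : k ≤ 1)
  rw [not_lt] at hk2
  obtain ⟨q, p, hq, hqp⟩ := exists_approx hirr h0 h1 n
  set θ : ℝ := q * ε - p with hθ
  have hM : 2 * (((k - 1) * q + 1 : ℕ) : ℝ) * |θ| < 1 := by
    refine lt_of_le_of_lt ?_ hqp
    refine mul_le_mul_of_nonneg_right ?_ (abs_nonneg _)
    have : 2 * ((k - 1) * q + 1) ≤ cfa ε n * q := by
      obtain ⟨k', hk'⟩ := Nat.exists_eq_add_of_le hk2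
      have h2 : 2 * k ≤ cfa ε n := by omega
      have h3 : 2 * k * q ≤ cfa ε n * q := Nat.mul_le_mul_right _ h2
      rw [hk'] at h3 ⊢
      have : 2 + k' - 1 = k' + 1 := by omega
      rw [this]
      nlinarith
    exact_mod_cast this
  obtain ⟨j, hj⟩ := exists_good hirr ℓ x0 θ _ hM
  set y := (T2 ε)^[j] x0 with hy
  have hx0f : Int.fract x0 = x0 := Int.fract_eq_self.2 ⟨hx0.1, hx0.2.trans hl1⟩
  have hyf : y = Int.fract (x0 - j * ε) := by
    rw [hy, ← T2_iterate_fract h0 h1, hx0f]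
  have hymem : y ∈ Set.Ico (0 : ℝ) 1 := by
    rw [hyf]; exact ⟨Int.fract_nonneg _, Int.fract_lt_one _⟩
  set v : ℕ → Option L3 := fun i => symb ε ℓ ((T2 ε)^[i] y) with hv
  have hvf : ∀ i, v i = symb ε ℓ (Int.fract (x0 - j * ε - i * ε)) := by
    intro i
    simp only [hv]
    rw [hyf, T2_iterate_fract h0 h1]
  have hper : ∀ i < (k - 1) * q, v (i + q) = v i := by
    intro i hi
    obtain ⟨ha, hb⟩ := hj i (by omega)
    obtain ⟨hc, hd⟩ := hj (i + 1) (by omega)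
    have e : x0 - j * ε - ((i + 1 : ℕ) : ℝ) * ε = x0 - j * ε - i * ε - ε := by push_cast; ring
    rw [e] at hc hd
    rw [hvf, hvf, ← symb_shift ha hb hc hd]
    congr 1
    rw [Int.fract_eq_fract]
    exact ⟨-p, by rw [hθ]; push_cast; ring⟩
  have hper' : ∀ j < k, ∀ i < q, v (j * q + i) = v i := by
    intro j
    induction j with
    | zero => simp
    | succ j ih =>
      intro hjk i hi
      rw [← ih (by omega) i hi, ← hper (j * q + i)]
      · congr 1; ring
      · have : (j + 1) * q ≤ (k - 1) * q := Nat.mul_le_mul_right _ (by omega)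
        nlinarith
  have hw : (List.range q).filterMap v ≠ [] := by
    intro h
    rw [List.filterMap_eq_nil_iff] at h
    have hv0 : v 0 = none := h 0 (List.mem_range.2 hq)
    have hv1 : v 1 ≠ none := symb_T2_ne_none hε' hymem.2 hv0
    rcases hq.eq_or_lt with hq1 | hq1
    · have := hper 0 (Nat.mul_pos (by omega) hq)
      rw [← hq1, Nat.zero_add] at this
      exact hv1 (this.trans hv0)
    · exact hv1 (h 1 (List.mem_range.2 hq1))
  refine le_wordIndex hw (by omega) ?_
  rw [← filterMap_periodic v q k hper']
  obtain ⟨m, hm⟩ := filterMap_symb h0 h1 hε hε' hl1 (k * q) y hymem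
  obtain ⟨i, hi⟩ := exists_retr_eq h0 h1 hε hε' hl1 hx0 j
  refine isFactor_of_eq (i := i) (m := m) ?_
  rw [hm, hi]
  exact List.map_congr_left fun t _ => u3_iterate ε ℓ x0 i t

/-- if the partial quotients of `ε` are bounded, then the index of the
3iet word is at least `sup_n ⌊a_n / 2⌋`. -/
theorem threeIet_index_ge_sup_half_partial_quotients
    (ε ℓ x0 : ℝ) (hirr : Irrational ε) (h0 : 0 < ε) (h1 : ε < 1)
    (hl : max ε (1 - ε) < ℓ) (hl1 : ℓ < 1) (hx0 : x0 ∈ Set.Ico 0 ℓ)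
    (hbdd : ∃ K : ℕ, ∀ n : ℕ, cfa ε n ≤ K) :
    (⨆ n : ℕ, ((cfa ε n / 2 : ℕ) : EReal)) ≤ wordIndex (u3 ε ℓ x0) :=
  iSup_le fun n => half_cfa_le hirr h0 h1 ((le_max_left _ _).trans_lt hl)
    ((le_max_right _ _).trans_lt hl) hl1 hx0 n
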